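/- (Main Lemma for Strassen-like decoding graphs.) Let D be a fixed connected graph with two disjoint distinguished vertex subsets: m input vertices and t output vertices, where 2 ≤ t < m, and with maximum degree bounded by a constant. Define Dec_1D = D and, for k ≥ 1, let Dec_{k+1}D be obtained from m^k disjoint copies of D and t disjoint copies of Dec_kD by identifying, for each i ∈ [m^k] and j ∈ [t], the j-th output vertex of the i-th copy of D with the i-th input vertex of the j-th copy of Dec_kD; add loops to make Dec_kD d-regular for a suitable constant d and regard edges as undirected. Then there exists a constant c > 0, depending only on D, such that for every k ≥ 1, h(Dec_kD) ≥ c·(t/m)^k. -/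

import Mathlib

/-!
Compare the density of a set `S` in a node of the recursion tree with its density in a child of that
node. A copy of `D` below the node has all its inputs in the node and one output in each child, so
only the copies that meet both `S` and its complement can make the two densities differ. Averaging
over a level and telescoping up to the root bounds the mean distance between the densities of the
nodes of any level and the density `σ` of the root by `ε = t * M / t ^ k`, where `M` is the number
of mixed copies.

Consequently `||S| - σ|V|| ≤ ε|V|`; and since the nodes of the bottom level are single vertices,
whose densities are `0` or `1`, also `min σ (1 - σ) ≤ ε`. If `|S| ≤ |V| / 2`, the two bounds give
`|S| ≤ 2ε|V|`, where `|V| ≤ m ^ (k + 1) / (m - t)` is a geometric sum. Finally, `D` being connected,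
every mixed copy has an edge in the boundary of `S`.
-/

open scoped Classical

/-- A finite undirected multigraph, given by its edge-endpoint incidence map.
A loop is an edge whose two endpoints coincide; it contributes 1 to the degree
of its vertex. -/
structure Multigraph where
  V : Type
  E : Type
  [fintypeV : Fintype V]
  [fintypeE : Fintype E]
  ends : E → Sym2 V

attribute [instance] Multigraph.fintypeV Multigraph.fintypeE

namespace Multigraph

/-- The degree of a vertex: the number of edges containing it (a loop counts once). -/
noncomputable def degree (G : Multigraph) (v : G.V) : ℕ :=
  (Finset.univ.filter fun e => v ∈ G.ends e).card

/-- `G` is `d`-regular. -/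
def IsRegular (G : Multigraph) (d : ℕ) : Prop := ∀ v, G.degree v = d

/-- `E_G(A,B)`: the set of edges with one endpoint in `A` and the other in `B`. -/
noncomputable def between (G : Multigraph) (A B : Finset G.V) : Finset G.E :=
  Finset.univ.filter fun e => ∃ a ∈ A, ∃ b ∈ B, G.ends e = s(a, b)

/-- `E_G(S, V ∖ S)`. -/
noncomputable def edgeBoundary (G : Multigraph) (S : Finset G.V) : Finset G.E :=
  G.between S Sᶜ

/-- The edge expansion `h(G)` of a `d`-regular multigraph:
`min_{U ⊆ V, |U| ≤ |V|/2} |E(U, V∖U)| / (d·|U|)`. -/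
noncomputable def expansion (G : Multigraph) (d : ℕ) : ℝ :=
  sInf {x : ℝ | ∃ U : Finset G.V, U.Nonempty ∧ 2 * U.card ≤ Fintype.card G.V ∧
    x = ((G.edgeBoundary U).card : ℝ) / ((d : ℝ) * (U.card : ℝ))}

/-- The edge expansion `h_s(G)` restricted to sets of size at most `s`. -/
noncomputable def expansionAtMost (G : Multigraph) (d : ℕ) (s : ℝ) : ℝ :=
  sInf {x : ℝ | ∃ U : Finset G.V, U.Nonempty ∧ (U.card : ℝ) ≤ s ∧
    x = ((G.edgeBoundary U).card : ℝ) / ((d : ℝ) * (U.card : ℝ))}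

end Multigraph

/-- The base (decoding) graph `Dec_1` of a Strassen-like algorithm:
`m` input vertices (`Fin m`, the upper side) and `t` output vertices
(`Fin t`, the lower side), disjoint from the inputs; every edge is directed
from an input to an output. -/
structure BaseGraph (m t : ℕ) where
  E : Type
  [fintypeE : Fintype E]
  src : E → Fin m
  dst : E → Fin t

attribute [instance] BaseGraph.fintypeE

/-- Connectivity of the base graph (on vertex set `Fin m ⊕ Fin t`). -/
def BaseGraph.Connected {m t : ℕ} (D : BaseGraph m t) : Prop :=
  (SimpleGraph.fromRel fun u v : Fin m ⊕ Fin t =>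
    ∃ e, u = Sum.inl (D.src e) ∧ v = Sum.inr (D.dst e)).Connected

/-- In-degree (within the base graph) of the `j`-th output vertex. -/
noncomputable def BaseGraph.inDeg {m t : ℕ} (D : BaseGraph m t) (j : Fin t) : ℕ :=
  (Finset.univ.filter fun e => D.dst e = j).card

/-- Out-degree (within the base graph) of the `q`-th input vertex. -/
noncomputable def BaseGraph.outDeg {m t : ℕ} (D : BaseGraph m t) (q : Fin m) : ℕ :=
  (Finset.univ.filter fun e => D.src e = q).card

/-- `DecStructure D k G` records that the multigraph `G` is (a loop-augmented copy of)
the recursively built decoding graph `Dec_kD`: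

* `G` is layered, with levels `0, …, k` (level `i` here is the level `l_{i+1}` of the
  paper), level `i` having `t^(k-i) * m^i` vertices (level `0` carries the `t^k`
  outputs and level `k` the `m^k` inputs);
* the vertices of level `i` are partitioned into the sets `V_u = node i a`,
  `a < t^(k-i)`, of size `m^i`, corresponding to the nodes of the recursion tree
  `T_k`; the parent of node `(i, a)` is `(i+1, a/t)`, i.e. node `(i+1, b)` has
  children `(i, t*b+j)` for `j < t`, and the root `(k, 0)` corresponds to the top
  level;
* the non-loop edges of `G` decompose into edge-disjoint copies of the base graph
  `D`: each copy `c` sits between consecutive levels `copyLevel c` and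
  `copyLevel c + 1`, its `m` input vertices lying in the tree-node set
  `node (copyLevel c + 1) (copyNode c)` and its `j`-th output vertex lying in the
  `j`-th child set `node (copyLevel c) (t * copyNode c + j)` (this realizes the
  recursive identification of the `j`-th output of each copy of `Dec_1` with the
  corresponding input of the `j`-th sub-copy of `Dec_{k-1}`);
* every vertex is the input-side vertex of at most one copy and the output-side
  vertex of at most one copy, and each vertex not on the bottom (resp. top) level
  is an input (resp. output) vertex of some copy;
* any remaining edges are loops (added to make `G` regular).  -/
structure DecStructure {m t : ℕ} (D : BaseGraph m t) (k : ℕ) (G : Multigraph) where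
  level : G.V → ℕ
  level_le : ∀ v, level v ≤ k
  card_level : ∀ i, i ≤ k →
    (Finset.univ.filter fun v => level v = i).card = t ^ (k - i) * m ^ i
  node : ℕ → ℕ → Finset G.V
  node_level : ∀ i a, ∀ v ∈ node i a, level v = i
  node_card : ∀ i, i ≤ k → ∀ a, a < t ^ (k - i) → (node i a).card = m ^ i
  node_disjoint : ∀ i a b, a ≠ b → Disjoint (node i a) (node i b)
  node_cover : ∀ v, ∃ a, a < t ^ (k - level v) ∧ v ∈ node (level v) a
  ι : Type
  [fintypeι : Fintype ι]
  copyLevel : ι → ℕ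
  copyLevel_lt : ∀ c, copyLevel c < k
  copyNode : ι → ℕ
  copyNode_lt : ∀ c, copyNode c < t ^ (k - 1 - copyLevel c)
  vmap : ι → Fin m ⊕ Fin t → G.V
  vmap_inj : ∀ c, Function.Injective (vmap c)
  emap : ι → D.E → G.E
  emap_inj : Function.Injective fun p : ι × D.E => emap p.1 p.2
  ends_emap : ∀ c e,
    G.ends (emap c e) = s(vmap c (Sum.inl (D.src e)), vmap c (Sum.inr (D.dst e)))
  vmap_inl_mem : ∀ c q, vmap c (Sum.inl q) ∈ node (copyLevel c + 1) (copyNode c)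
  vmap_inr_mem : ∀ c (j : Fin t), vmap c (Sum.inr j) ∈ node (copyLevel c) (t * copyNode c + (j : ℕ))
  inl_unique : ∀ c c' q q', vmap c (Sum.inl q) = vmap c' (Sum.inl q') → c = c'
  inr_unique : ∀ c c' j j', vmap c (Sum.inr j) = vmap c' (Sum.inr j') → c = c'
  exists_inl : ∀ v, 0 < level v → ∃ c q, vmap c (Sum.inl q) = v
  exists_inr : ∀ v, level v < k → ∃ c j, vmap c (Sum.inr j) = v
  edge_cases : ∀ f : G.E, (G.ends f).IsDiag ∨ ∃ c e, emap c e = f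

attribute [instance] DecStructure.fintypeι

namespace DecStructure

variable {m t : ℕ} {D : BaseGraph m t} {k : ℕ} {G : Multigraph}

/-- The level `l_{i+1}` (0-indexed as `i`) of the decoding graph. -/
noncomputable def lvl (ds : DecStructure D k G) (i : ℕ) : Finset G.V :=
  Finset.univ.filter fun v => ds.level v = i

/-- The fraction of vertices of a set `W` lying in `S`. -/
noncomputable def frac (_ : DecStructure D k G) (S W : Finset G.V) : ℝ :=
  ((S ∩ W).card : ℝ) / (W.card : ℝ)

/-- `σ_i`: the fractional size of `S` at level `i` (0-indexed). -/
noncomputable def sigma (ds : DecStructure D k G) (S : Finset G.V) (i : ℕ) : ℝ :=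
  ds.frac S (ds.lvl i)

/-- The copies of the base graph containing both a vertex of `S` and a vertex
outside `S`. -/
noncomputable def mixedCopies (ds : DecStructure D k G) (S : Finset G.V) :
    Finset ds.ι :=
  Finset.univ.filter fun c => (∃ x, ds.vmap c x ∈ S) ∧ ∃ x, ds.vmap c x ∉ S

end DecStructure

section Expect

open scoped BigOperators

lemma expect_range_mul {M : Type*} [AddCommMonoid M] [Module ℚ≥0 M] (t n : ℕ) (f : ℕ → M) :
    𝔼 a ∈ Finset.range (t * n), f a = 𝔼 b ∈ Finset.range n, 𝔼 j : Fin t, f (t * b + j) := by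
  rw [← Finset.expect_product' _ _ fun b (j : Fin t) => f (t * b + j)]
  symm
  refine Finset.expect_nbij (fun p => t * p.1 + p.2) ?_ (fun _ _ => rfl) ?_ ?_
  · rintro ⟨b, j⟩ h
    have hb : b + 1 ≤ n := by simpa using h
    have := Nat.mul_le_mul_left t hb
    simp only [Finset.mem_range]
    lia
  · rintro ⟨b, j⟩ - ⟨b', j'⟩ - h
    have hb : b = b' := by
      simpa [Nat.mul_add_div j.pos, Nat.div_eq_of_lt] using congrArg (· / t) h
    subst hb
    simpa [Fin.ext_iff] using h
  · intro a ha
    have ha' : a < t * n := by simpa using ha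
    have ht : 0 < t := Nat.pos_of_mul_pos_right (Nat.zero_lt_of_lt ha')
    exact ⟨(a / t, ⟨a % t, Nat.mod_lt a ht⟩), by simpa using Nat.div_lt_of_lt_mul ha',
      Nat.div_add_mod a t⟩

lemma expect_boole_mem {α K : Type*} [DecidableEq α] [Semifield K] [CharZero K]
    (s t : Finset α) :
    𝔼 a ∈ s, (if a ∈ t then (1 : K) else 0) = ((t ∩ s).card : K) / s.card := by
  rw [Finset.expect_eq_sum_div_card, Finset.sum_boole, Finset.filter_mem_eq_inter,
    Finset.inter_comm]

end Expect

lemma div_add_one_mul_le {K : Type*} [Field K] [LinearOrder K] [IsStrictOrderedRing K] {c d : K}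
    (hc : 0 ≤ c) (hd : 0 ≤ d) : c / (d + 1) * d ≤ c := by
  rw [div_mul_eq_mul_div, mul_div_assoc]
  exact mul_le_of_le_one_right hc (div_le_one_of_le₀ (by simp) (by positivity))

lemma BaseGraph.Connected.exists_cut_edge {m t : ℕ} {D : BaseGraph m t} (h : D.Connected)
    {P : Set (Fin m ⊕ Fin t)} {x y : Fin m ⊕ Fin t} (hx : x ∈ P) (hy : y ∉ P) :
    ∃ e, (Sum.inl (D.src e) ∈ P ∧ Sum.inr (D.dst e) ∉ P) ∨
      (Sum.inl (D.src e) ∉ P ∧ Sum.inr (D.dst e) ∈ P) := by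
  obtain ⟨walk⟩ := h.preconnected x y
  obtain ⟨dart, -, hfst, hsnd⟩ := walk.exists_boundary_dart P hx hy
  obtain ⟨-, ⟨e, h₁, h₂⟩ | ⟨e, h₁, h₂⟩⟩ := (SimpleGraph.fromRel_adj _ _ _).mp dart.adj
  · exact ⟨e, Or.inl ⟨h₁ ▸ hfst, h₂ ▸ hsnd⟩⟩
  · exact ⟨e, Or.inr ⟨h₁ ▸ hsnd, h₂ ▸ hfst⟩⟩

lemma Multigraph.mem_edgeBoundary {G : Multigraph} {S : Finset G.V} {f : G.E} :
    f ∈ G.edgeBoundary S ↔ ∃ a ∈ S, ∃ b ∉ S, G.ends f = s(a, b) := by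
  simp [edgeBoundary, between]

namespace DecStructure

open scoped BigOperators

variable {m t : ℕ} {D : BaseGraph m t} {k : ℕ} {G : Multigraph} (ds : DecStructure D k G)
  (S : Finset G.V)

section MixedCopies

variable {S}

lemma mem_mixedCopies {c : ds.ι} :
    c ∈ ds.mixedCopies S ↔ (∃ x, ds.vmap c x ∈ S) ∧ ∃ x, ds.vmap c x ∉ S := by
  simp [mixedCopies]

lemma exists_emap_mem_edgeBoundary (hconn : D.Connected) {c : ds.ι}
    (hc : c ∈ ds.mixedCopies S) : ∃ e, ds.emap c e ∈ G.edgeBoundary S := by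
  obtain ⟨⟨x, hx⟩, ⟨y, hy⟩⟩ := ds.mem_mixedCopies.mp hc
  obtain ⟨e, ⟨hsrc, hdst⟩ | ⟨hsrc, hdst⟩⟩ :=
    hconn.exists_cut_edge (P := ds.vmap c ⁻¹' S) hx hy
  · exact ⟨e, Multigraph.mem_edgeBoundary.mpr ⟨_, hsrc, _, hdst, ds.ends_emap c e⟩⟩
  · exact ⟨e, Multigraph.mem_edgeBoundary.mpr
      ⟨_, hdst, _, hsrc, (ds.ends_emap c e).trans Sym2.eq_swap⟩⟩

variable (S)

lemma card_mixedCopies_le_card_edgeBoundary (hconn : D.Connected) :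
    (ds.mixedCopies S).card ≤ (G.edgeBoundary S).card := by
  refine Finset.card_le_card_of_forall_subsingleton (fun c f => ∃ e, ds.emap c e = f) ?_ ?_
  · intro c hc
    obtain ⟨e, he⟩ := ds.exists_emap_mem_edgeBoundary hconn hc
    exact ⟨_, he, e, rfl⟩
  · rintro f - c ⟨-, e, he⟩ c' ⟨-, e', he'⟩
    exact congrArg Prod.fst (@ds.emap_inj (c, e) (c', e') (he.trans he'.symm))

lemma abs_boole_vmap_sub_boole_vmap_le (c : ds.ι) (x y : Fin m ⊕ Fin t) :
    |(if ds.vmap c x ∈ S then (1 : ℝ) else 0) - (if ds.vmap c y ∈ S then 1 else 0)| ≤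
      if c ∈ ds.mixedCopies S then 1 else 0 := by
  by_cases hc : c ∈ ds.mixedCopies S
  · rw [if_pos hc]
    split_ifs <;> norm_num
  · have hxy : ds.vmap c x ∈ S ↔ ds.vmap c y ∈ S := by
      by_contra hxy
      exact hc (ds.mem_mixedCopies.mpr (by grind))
    simp [hxy, hc]

end MixedCopies

section Copies

/-- The copies of the base graph below the node `(i + 1, b)` of the recursion tree: their inputs lie
in that node, and their outputs in its children. -/
noncomputable def copies (i b : ℕ) : Finset ds.ι :=
  Finset.univ.filter fun c => ds.copyLevel c = i ∧ ds.copyNode c = b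

variable {i b : ℕ}

lemma mem_copies {c : ds.ι} : c ∈ ds.copies i b ↔ ds.copyLevel c = i ∧ ds.copyNode c = b := by
  simp [copies]

variable {ds} in
lemma eq_of_mem_node {i' a a' : ℕ} {v : G.V} (h : v ∈ ds.node i a) (h' : v ∈ ds.node i' a') :
    i = i' ∧ a = a' := by
  obtain rfl : i = i' := (ds.node_level _ _ _ h).symm.trans (ds.node_level _ _ _ h')
  refine ⟨rfl, ?_⟩
  by_contra hne
  exact Finset.disjoint_left.mp (ds.node_disjoint i a a' hne) h h'

lemma image_vmap_inl_copies :
    (ds.copies i b ×ˢ Finset.univ).image (fun p : ds.ι × Fin m => ds.vmap p.1 (Sum.inl p.2)) =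
      ds.node (i + 1) b := by
  ext v
  simp only [Finset.mem_image, Finset.mem_product, Finset.mem_univ, and_true, Prod.exists,
    mem_copies]
  constructor
  · rintro ⟨c, q, ⟨rfl, rfl⟩, rfl⟩
    exact ds.vmap_inl_mem c q
  · intro hv
    obtain ⟨c, q, rfl⟩ := ds.exists_inl v (by rw [ds.node_level _ _ _ hv]; exact i.succ_pos)
    obtain ⟨hi, hb⟩ := eq_of_mem_node (ds.vmap_inl_mem c q) hv
    exact ⟨c, q, ⟨Nat.succ_injective hi, hb⟩, rfl⟩

lemma image_vmap_inr_copies (hi : i < k) (j : Fin t) :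
    (ds.copies i b).image (fun c => ds.vmap c (Sum.inr j)) = ds.node i (t * b + j) := by
  ext v
  simp only [Finset.mem_image, mem_copies]
  constructor
  · rintro ⟨c, ⟨rfl, rfl⟩, rfl⟩
    exact ds.vmap_inr_mem c j
  · intro hv
    obtain ⟨c, j', rfl⟩ := ds.exists_inr v (by rwa [ds.node_level _ _ _ hv])
    obtain ⟨hlevel, hindex⟩ := eq_of_mem_node (ds.vmap_inr_mem c j') hv
    have hnode : ds.copyNode c = b := by
      simpa [Nat.mul_add_div j.pos, Nat.div_eq_of_lt] using congrArg (· / t) hindex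
    obtain rfl : j' = j := by
      rw [hnode] at hindex
      exact Fin.ext (Nat.add_left_cancel hindex)
    exact ⟨c, ⟨hlevel, hnode⟩, rfl⟩

lemma vmap_inl_injective :
    Function.Injective fun p : ds.ι × Fin m => ds.vmap p.1 (Sum.inl p.2) := by
  rintro ⟨c, q⟩ ⟨c', q'⟩ h
  obtain rfl := ds.inl_unique _ _ _ _ h
  simpa using ds.vmap_inj c h

lemma vmap_inr_injective (j : Fin t) : Function.Injective fun c => ds.vmap c (Sum.inr j) :=
  fun _ _ h => ds.inr_unique _ _ _ _ h

lemma card_copies (hm : 0 < m) (hi : i < k) (hb : b < t ^ (k - (i + 1))) :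
    (ds.copies i b).card = m ^ i := by
  have h := ds.node_card (i + 1) hi b hb
  rw [← image_vmap_inl_copies, Finset.card_image_of_injective _ ds.vmap_inl_injective,
    Finset.card_product, Finset.card_univ, Fintype.card_fin, pow_succ] at h
  exact Nat.eq_of_mul_eq_mul_right hm h

lemma frac_node_succ :
    ds.frac S (ds.node (i + 1) b) =
      𝔼 c ∈ ds.copies i b, 𝔼 q : Fin m, if ds.vmap c (Sum.inl q) ∈ S then (1 : ℝ) else 0 := by
  rw [frac, ← expect_boole_mem, ← image_vmap_inl_copies,
    Finset.expect_image ds.vmap_inl_injective.injOn, Finset.expect_product]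

lemma frac_node_child (hi : i < k) (j : Fin t) :
    ds.frac S (ds.node i (t * b + j)) =
      𝔼 c ∈ ds.copies i b, if ds.vmap c (Sum.inr j) ∈ S then (1 : ℝ) else 0 := by
  rw [frac, ← expect_boole_mem, ← ds.image_vmap_inr_copies hi,
    Finset.expect_image (ds.vmap_inr_injective j).injOn]

lemma abs_frac_child_sub_frac_le (hm : 0 < m) (hi : i < k) (j : Fin t) :
    |ds.frac S (ds.node i (t * b + j)) - ds.frac S (ds.node (i + 1) b)| ≤
      ((ds.mixedCopies S ∩ ds.copies i b).card : ℝ) / (ds.copies i b).card := by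
  have : Nonempty (Fin m) := ⟨⟨0, hm⟩⟩
  rw [ds.frac_node_child S hi, ds.frac_node_succ, ← Finset.expect_sub_distrib,
    ← expect_boole_mem]
  refine (Finset.abs_expect_le _ _).trans (Finset.expect_le_expect fun c _ => ?_)
  rw [← Fintype.expect_const (ι := Fin m) (if ds.vmap c (Sum.inr j) ∈ S then (1 : ℝ) else 0),
    ← Finset.expect_sub_distrib]
  exact (Finset.abs_expect_le _ _).trans <| Finset.expect_le Finset.univ_nonempty fun q _ =>
    ds.abs_boole_vmap_sub_boole_vmap_le S c _ _

end Copies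

section Deviation

variable {i : ℕ}

lemma lvl_eq_biUnion_node (i : ℕ) :
    ds.lvl i = (Finset.range (t ^ (k - i))).biUnion (ds.node i) := by
  ext v
  simp only [lvl, Finset.mem_filter, Finset.mem_univ, true_and, Finset.mem_biUnion,
    Finset.mem_range]
  constructor
  · rintro rfl
    exact ds.node_cover v
  · rintro ⟨a, -, hv⟩
    exact ds.node_level i a v hv

lemma card_lvl (hi : i ≤ k) : (ds.lvl i).card = t ^ (k - i) * m ^ i := ds.card_level i hi

lemma sigma_eq_expect_frac_node (hi : i ≤ k) :
    ds.sigma S i = 𝔼 a ∈ Finset.range (t ^ (k - i)), ds.frac S (ds.node i a) := by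
  have hinter : (S ∩ ds.lvl i).card =
      ∑ a ∈ Finset.range (t ^ (k - i)), (S ∩ ds.node i a).card := by
    rw [lvl_eq_biUnion_node, Finset.inter_biUnion, Finset.card_biUnion]
    exact fun a _ a' _ hne =>
      (ds.node_disjoint i a a' hne).mono Finset.inter_subset_right Finset.inter_subset_right
  have hfrac : ∀ a ∈ Finset.range (t ^ (k - i)),
      ds.frac S (ds.node i a) = ((S ∩ ds.node i a).card : ℝ) / (m : ℝ) ^ i := by
    intro a ha
    rw [frac, ds.node_card i hi a (Finset.mem_range.mp ha), Nat.cast_pow]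
  rw [Finset.expect_congr rfl hfrac, ← Finset.expect_div, Finset.expect_eq_sum_div_card,
    Finset.card_range, div_div, sigma, frac, hinter, ds.card_lvl hi]
  push_cast
  rfl

/-- The mean, over the nodes of level `i` of the recursion tree, of the distance between the density
of `S` in the node and its density in the root. -/
noncomputable def meanDeviation (i : ℕ) : ℝ :=
  𝔼 a ∈ Finset.range (t ^ (k - i)), |ds.frac S (ds.node i a) - ds.sigma S k|

lemma meanDeviation_top : ds.meanDeviation S k = 0 := by
  simp [meanDeviation, ds.sigma_eq_expect_frac_node S le_rfl]

lemma sum_card_mixedCopies_inter_copies (i : ℕ) :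
    ∑ b ∈ Finset.range (t ^ (k - (i + 1))), (ds.mixedCopies S ∩ ds.copies i b).card =
      ((ds.mixedCopies S).filter fun c => ds.copyLevel c = i).card := by
  rw [Finset.card_eq_sum_card_fiberwise (f := ds.copyNode)]
  · refine Finset.sum_congr rfl fun b _ => congrArg Finset.card ?_
    ext c
    simp [mem_copies, and_assoc]
  · intro c hc
    obtain ⟨-, rfl⟩ := Finset.mem_filter.mp hc
    simpa [Nat.sub_sub, add_comm] using ds.copyNode_lt c

lemma expect_card_mixedCopies_inter_copies_div_le (ht : 0 < t) (htm : t ≤ m) (hi : i < k) :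
    𝔼 b ∈ Finset.range (t ^ (k - (i + 1))),
        ((ds.mixedCopies S ∩ ds.copies i b).card : ℝ) / (m : ℝ) ^ i ≤
      t / (t : ℝ) ^ k * ((ds.mixedCopies S).filter fun c => ds.copyLevel c = i).card := by
  have ht' : (0 : ℝ) < t := Nat.cast_pos.mpr ht
  have hpow : (t : ℝ) ^ k ≤ t * (t ^ (k - (i + 1)) * m ^ i) :=
    calc (t : ℝ) ^ k = t ^ (1 + ((k - (i + 1)) + i)) := by congr 1; lia
      _ = t * (t ^ (k - (i + 1)) * t ^ i) := by rw [pow_add, pow_add, pow_one]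
      _ ≤ t * (t ^ (k - (i + 1)) * m ^ i) := by gcongr
  have hm : (0 : ℝ) < m := ht'.trans_le (Nat.cast_le.mpr htm)
  rw [← Finset.expect_div, Finset.expect_eq_sum_div_card, Finset.card_range, div_div,
    ← Nat.cast_sum, sum_card_mixedCopies_inter_copies, Nat.cast_pow, div_mul_eq_mul_div,
    div_le_div_iff₀ (by positivity) (by positivity)]
  exact (mul_le_mul_of_nonneg_left hpow (Nat.cast_nonneg _)).trans_eq (by ring)

lemma meanDeviation_le_meanDeviation_succ_add (ht : 0 < t) (htm : t ≤ m) (hi : i < k) :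
    ds.meanDeviation S i ≤ ds.meanDeviation S (i + 1) +
      t / (t : ℝ) ^ k * ((ds.mixedCopies S).filter fun c => ds.copyLevel c = i).card := by
  have : Nonempty (Fin t) := ⟨⟨0, ht⟩⟩
  have hexp : t ^ (k - i) = t * t ^ (k - (i + 1)) := by
    rw [← pow_succ']
    congr 1
    lia
  have hchild : ∀ b ∈ Finset.range (t ^ (k - (i + 1))), ∀ j : Fin t,
      |ds.frac S (ds.node i (t * b + j)) - ds.sigma S k| ≤
        |ds.frac S (ds.node (i + 1) b) - ds.sigma S k| +
          ((ds.mixedCopies S ∩ ds.copies i b).card : ℝ) / (m : ℝ) ^ i := by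
    intro b hb j
    have h := ds.abs_frac_child_sub_frac_le S (b := b) (ht.trans_le htm) hi j
    rw [ds.card_copies (ht.trans_le htm) hi (Finset.mem_range.mp hb), Nat.cast_pow] at h
    linarith [abs_sub_le (ds.frac S (ds.node i (t * b + j))) (ds.frac S (ds.node (i + 1) b))
      (ds.sigma S k)]
  rw [meanDeviation, hexp, expect_range_mul]
  refine (Finset.expect_le_expect fun b hb =>
    Finset.expect_le Finset.univ_nonempty fun j _ => hchild b hb j).trans ?_
  rw [Finset.expect_add_distrib]
  exact add_le_add_right (ds.expect_card_mixedCopies_inter_copies_div_le S ht htm hi) _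

lemma meanDeviation_le_card_filter (ht : 0 < t) (htm : t ≤ m) (hi : i ≤ k) :
    ds.meanDeviation S i ≤
      t / (t : ℝ) ^ k * ((ds.mixedCopies S).filter fun c => i ≤ ds.copyLevel c).card := by
  induction hi using Nat.decreasingInduction with
  | self =>
    rw [meanDeviation_top]
    positivity
  | of_succ i hi ih =>
    have hsplit : ((ds.mixedCopies S).filter fun c => i ≤ ds.copyLevel c).card =
        ((ds.mixedCopies S).filter fun c => i + 1 ≤ ds.copyLevel c).card +
          ((ds.mixedCopies S).filter fun c => ds.copyLevel c = i).card := by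
      rw [← Finset.card_union_of_disjoint
        (Finset.disjoint_filter.mpr fun c _ h₁ h₂ => by lia), ← Finset.filter_or]
      exact congrArg Finset.card (Finset.filter_congr fun c _ => by lia)
    rw [hsplit, Nat.cast_add, mul_add]
    exact (ds.meanDeviation_le_meanDeviation_succ_add S ht htm hi).trans (by gcongr)

lemma meanDeviation_le (ht : 0 < t) (htm : t ≤ m) (hi : i ≤ k) :
    ds.meanDeviation S i ≤ t / (t : ℝ) ^ k * (ds.mixedCopies S).card :=
  (ds.meanDeviation_le_card_filter S ht htm hi).trans <| by
    gcongr
    exact Finset.filter_subset _ _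

lemma abs_sigma_sub_sigma_top_le (ht : 0 < t) (hi : i ≤ k) :
    |ds.sigma S i - ds.sigma S k| ≤ ds.meanDeviation S i := by
  have hne : (Finset.range (t ^ (k - i))).Nonempty := by simp [ht.ne']
  rw [ds.sigma_eq_expect_frac_node S hi, ← Finset.expect_const hne (ds.sigma S k),
    ← Finset.expect_sub_distrib]
  simpa [meanDeviation, hne] using Finset.abs_expect_le _ _

lemma frac_singleton (v : G.V) : ds.frac S {v} = if v ∈ S then 1 else 0 := by
  by_cases hv : v ∈ S <;> simp [frac, hv]

lemma min_sigma_top_le_meanDeviation_zero (ht : 0 < t) :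
    min (ds.sigma S k) (1 - ds.sigma S k) ≤ ds.meanDeviation S 0 := by
  refine Finset.le_expect (by simp [ht.ne']) fun a ha => ?_
  obtain ⟨v, hv⟩ : ∃ v, ds.node 0 a = {v} := by
    rw [← Finset.card_eq_one, ds.node_card 0 k.zero_le a (Finset.mem_range.mp ha), pow_zero]
  rw [hv, frac_singleton]
  split_ifs
  · exact (min_le_right _ _).trans (le_abs_self _)
  · simpa using Or.inl (le_abs_self (ds.sigma S k))

end Deviation

section Card

lemma card_inter_lvl (i : ℕ) :
    ((S ∩ ds.lvl i).card : ℝ) = (ds.lvl i).card * ds.sigma S i := by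
  rcases (ds.lvl i).eq_empty_or_nonempty with h | h
  · simp [h]
  · rw [sigma, frac, mul_div_cancel₀ _ (Nat.cast_ne_zero.mpr h.card_ne_zero)]

lemma card_eq_sum_card_inter_lvl :
    S.card = ∑ i ∈ Finset.range (k + 1), (S ∩ ds.lvl i).card := by
  rw [Finset.card_eq_sum_card_fiberwise (f := ds.level) (t := Finset.range (k + 1))
    fun v _ => by simpa [Nat.lt_succ_iff] using ds.level_le v]
  refine Finset.sum_congr rfl fun i _ => congrArg Finset.card ?_
  ext v
  simp [lvl]

lemma card_eq_sum_card_lvl :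
    Fintype.card G.V = ∑ i ∈ Finset.range (k + 1), (ds.lvl i).card := by
  simpa using ds.card_eq_sum_card_inter_lvl Finset.univ

lemma card_mul_sub_le (ds : DecStructure D k G) (htm : t ≤ m) :
    Fintype.card G.V * (m - t) ≤ m ^ (k + 1) :=
  calc Fintype.card G.V * (m - t)
      = (∑ i ∈ Finset.range (k + 1), m ^ i * t ^ (k + 1 - 1 - i)) * (m - t) := by
        rw [ds.card_eq_sum_card_lvl]
        congr 1
        refine Finset.sum_congr rfl fun i hi => ?_
        rw [ds.card_lvl (Nat.lt_succ_iff.mp (Finset.mem_range.mp hi)), mul_comm,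
          Nat.add_sub_cancel]
    _ = m ^ (k + 1) - t ^ (k + 1) := geom_sum₂_mul_of_ge htm _
    _ ≤ m ^ (k + 1) := Nat.sub_le _ _

variable {ε : ℝ}

lemma abs_card_sub_sigma_top_mul_card_le (ht : 0 < t)
    (hε : ∀ i ≤ k, ds.meanDeviation S i ≤ ε) :
    |(S.card : ℝ) - ds.sigma S k * Fintype.card G.V| ≤ ε * Fintype.card G.V := by
  have hsum : (S.card : ℝ) - ds.sigma S k * Fintype.card G.V =
      ∑ i ∈ Finset.range (k + 1), (ds.sigma S i - ds.sigma S k) * (ds.lvl i).card := by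
    rw [ds.card_eq_sum_card_inter_lvl S, ds.card_eq_sum_card_lvl]
    push_cast
    rw [Finset.mul_sum, ← Finset.sum_sub_distrib]
    refine Finset.sum_congr rfl fun i _ => ?_
    rw [card_inter_lvl]
    ring
  rw [hsum, ds.card_eq_sum_card_lvl, Nat.cast_sum, Finset.mul_sum]
  refine (Finset.abs_sum_le_sum_abs _ _).trans (Finset.sum_le_sum fun i hi => ?_)
  have hi' : i ≤ k := Nat.lt_succ_iff.mp (Finset.mem_range.mp hi)
  rw [abs_mul, Nat.abs_cast]
  gcongr
  exact (ds.abs_sigma_sub_sigma_top_le S ht hi').trans (hε i hi')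

lemma card_le_two_mul_mul_card (ht : 0 < t) (hS : 2 * S.card ≤ Fintype.card G.V)
    (hε : ∀ i ≤ k, ds.meanDeviation S i ≤ ε) :
    (S.card : ℝ) ≤ 2 * ε * Fintype.card G.V := by
  have hS' : 2 * (S.card : ℝ) ≤ Fintype.card G.V := by exact_mod_cast hS
  obtain ⟨hlower, hupper⟩ := abs_le.mp (ds.abs_card_sub_sigma_top_mul_card_le S ht hε)
  have hmin := (ds.min_sigma_top_le_meanDeviation_zero S ht).trans (hε 0 k.zero_le)
  rcases min_le_iff.mp hmin with hσ | hσ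
  · linarith [mul_le_mul_of_nonneg_right hσ (Nat.cast_nonneg (α := ℝ) (Fintype.card G.V))]
  -- Here the bounds control the complement of `S`, which is at least as large as `S`.
  · linarith [mul_le_mul_of_nonneg_right hσ (Nat.cast_nonneg (α := ℝ) (Fintype.card G.V))]

end Card

lemma card_mul_pow_le_card_edgeBoundary (ds : DecStructure D k G) (ht : 0 < t) (htm : t < m)
    (hconn : D.Connected) (hS : 2 * S.card ≤ Fintype.card G.V) :
    ((m : ℝ) - t) / (2 * m * t) * (S.card : ℝ) * ((t : ℝ) / (m : ℝ)) ^ k ≤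
      ((G.edgeBoundary S).card : ℝ) := by
  have ht' : (0 : ℝ) < t := Nat.cast_pos.mpr ht
  have htm' : (t : ℝ) < m := Nat.cast_lt.mpr htm
  have hm : (0 : ℝ) < m := ht'.trans htm'
  have hsub : (0 : ℝ) < m - t := sub_pos.mpr htm'
  set M : ℝ := ((ds.mixedCopies S).card : ℝ)
  have hcard : (S.card : ℝ) ≤ 2 * (t / (t : ℝ) ^ k * M) * Fintype.card G.V :=
    ds.card_le_two_mul_mul_card S ht hS fun i hi => ds.meanDeviation_le S ht htm.le hi
  have hV : (Fintype.card G.V : ℝ) ≤ (m : ℝ) ^ (k + 1) / (m - t) := by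
    rw [le_div_iff₀ hsub, ← Nat.cast_sub htm.le]
    exact_mod_cast ds.card_mul_sub_le htm.le
  calc ((m : ℝ) - t) / (2 * m * t) * (S.card : ℝ) * ((t : ℝ) / m) ^ k
      ≤ (m - t) / (2 * m * t) * (2 * (t / (t : ℝ) ^ k * M) * (m ^ (k + 1) / (m - t))) *
          (t / m) ^ k := by
        gcongr
        exact hcard.trans (by gcongr)
    _ = M := by
        rw [div_pow, pow_succ]
        field_simp
    _ ≤ (G.edgeBoundary S).card :=
        Nat.cast_le.mpr (ds.card_mixedCopies_le_card_edgeBoundary S hconn)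

end DecStructure

theorem stmt12_general {m t : ℕ} (ht : 0 < t) (htm : t < m) {D : BaseGraph m t}
    (hconn : D.Connected) :
    ∃ c : ℝ, 0 < c ∧
      ∀ k, ∀ G : Multigraph, DecStructure D k G →
        ∀ S : Finset G.V, 2 * S.card ≤ Fintype.card G.V →
          c * (S.card : ℝ) * ((t : ℝ) / (m : ℝ)) ^ k ≤ ((G.edgeBoundary S).card : ℝ) := by
  have hm : 0 < m := ht.trans htm
  have hsub : (0 : ℝ) < m - t := sub_pos.mpr (Nat.cast_lt.mpr htm)
  exact ⟨(m - t) / (2 * m * t), by positivity, fun _ _ ds S hS =>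
    ds.card_mul_pow_le_card_edgeBoundary S ht htm hconn hS⟩

/-- **Main Lemma for Strassen-like decoding graphs.** Let `D` be a
fixed connected base graph with `m` inputs and `t` outputs (disjoint), `2 ≤ t < m`,
of constant maximum degree `Δ`.  Then there is a constant `c > 0` depending only on
`D` such that for every `k ≥ 1`, `h(Dec_kD) ≥ c·(t/m)^k`; that is, every
`S ⊆ V(Dec_kD)` with `|S| ≤ |V|/2` satisfies `|E(S, V∖S)| ≥ c·d·|S|·(t/m)^k`. -/
theorem stmt12 (m t : ℕ) (ht : 2 ≤ t) (htm : t < m) (D : BaseGraph m t)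
    (hconn : D.Connected)
    (Δ : ℕ) (hΔin : ∀ j : Fin t, D.inDeg j ≤ Δ) (hΔout : ∀ q : Fin m, D.outDeg q ≤ Δ)
    (d : ℕ) :
    ∃ c : ℝ, 0 < c ∧
      ∀ k, 1 ≤ k → ∀ G : Multigraph, ∀ ds : DecStructure D k G, G.IsRegular d →
        ∀ S : Finset G.V, 2 * S.card ≤ Fintype.card G.V →
          c * (d : ℝ) * (S.card : ℝ) * ((t : ℝ) / (m : ℝ)) ^ k ≤
            ((G.edgeBoundary S).card : ℝ) := by
  obtain ⟨c, hc, h⟩ := stmt12_general (by lia) htm hconn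
  exact ⟨c / (d + 1), by positivity, fun k _ G ds _ S hS => le_trans
    (by gcongr; exact div_add_one_mul_le hc.le d.cast_nonneg) (h k G ds S hS)⟩
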